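/- Let d ≥ 1, let I be a nonempty index set, and let M : I × ℕ → [0,∞) satisfy sup_{a∈I} ∑_{m=0}^∞ M(a,m) < ∞ and the uniform tail condition: for every ε > 0 there exists ℓ ∈ ℕ such that ∑_{m=ℓ}^∞ M(a,m) ≤ ε for all a ∈ I. Let p : I × ℕ → [0,1] satisfy p(a,m) ≤ 2^{−2(m−1)}·M(a,m) for all a ∈ I and all m ≥ 1. Then lim_{N→∞} sup_{a∈I} ∑_{m=0}^∞ 2^{2m} ∑_{l=0}^∞ 2^{−2l} · min{ 2·p(a,m), 2^{dl/2}·(p(a,m)/N)^{1/2} } = 0; that is, for every ε > 0 there exists N₀ such that the double series is ≤ ε for all N ≥ N₀ and all a ∈ I. -/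

import Mathlib

open scoped ENNReal

lemma fg_pow_aux (l : ℕ) : (2 : ℝ) ^ (-(2 : ℝ) * (l : ℝ)) = (1 / 4 : ℝ) ^ l := by
  rw [Real.rpow_mul (by norm_num), Real.rpow_natCast]
  congr 1
  rw [Real.rpow_neg (by norm_num)]
  norm_num

lemma fg_geom_aux : ∑' l : ℕ, ENNReal.ofReal ((1 / 4 : ℝ) ^ l) ≤ ENNReal.ofReal 2 := by
  rw [← ENNReal.ofReal_tsum_of_nonneg (fun l => by positivity)
    (summable_geometric_of_lt_one (by norm_num) (by norm_num)),
    tsum_geometric_of_lt_one (by norm_num) (by norm_num)]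
  apply ENNReal.ofReal_le_ofReal
  norm_num

/-- The inner series with mass one. -/
lemma fg_inner_tendsto (d : ℕ) :
    Filter.Tendsto (fun N : ℕ => ∑' l : ℕ, (1 / 4 : ℝ) ^ l *
      min 2 ((2 : ℝ) ^ (((d : ℝ) * (l : ℝ)) / 2) * Real.sqrt (1 / (N : ℝ))))
      Filter.atTop (nhds 0) := by
  have h := tendsto_tsum_of_dominated_convergence (𝓕 := Filter.atTop)
    (f := fun (N : ℕ) (l : ℕ) => (1 / 4 : ℝ) ^ l *
      min 2 ((2 : ℝ) ^ (((d : ℝ) * (l : ℝ)) / 2) * Real.sqrt (1 / (N : ℝ))))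
    (g := fun _ => (0 : ℝ)) (bound := fun l => (1 / 4 : ℝ) ^ l * 2)
    ((summable_geometric_of_lt_one (by norm_num) (by norm_num)).mul_right 2) ?_ ?_
  · simpa using h
  · intro l
    have h1 : Filter.Tendsto (fun N : ℕ => Real.sqrt (1 / (N : ℝ))) Filter.atTop (nhds 0) := by
      have := (Real.continuous_sqrt.tendsto 0).comp tendsto_one_div_atTop_nhds_zero_nat
      simpa [Function.comp_def] using this
    have h2 := ((tendsto_const_nhds (x := (2 : ℝ))).min
      (h1.const_mul ((2 : ℝ) ^ (((d : ℝ) * (l : ℝ)) / 2)))).const_mul ((1 / 4 : ℝ) ^ l)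
    simpa using h2
  · refine Filter.Eventually.of_forall fun N l => ?_
    rw [Real.norm_of_nonneg (by positivity)]
    gcongr
    exact min_le_left _ _

/-- The real-analytic core of the uniform Fournier--Guillin estimate: if the restricted
second moments `M(a,m)` are summable uniformly in `a` with uniformly small tails, and the
annulus masses `p(a,m)` are controlled by `2^{-2(m-1)} M(a,m)`, then the Fournier--Guillin
double series tends to `0` as `N → ∞`, uniformly in `a`. -/
theorem fournier_guillin_double_series_uniform_limit
    (d : ℕ) (hd : 1 ≤ d) {I : Type*} [Nonempty I]
    (M : I → ℕ → ℝ) (hM0 : ∀ a m, 0 ≤ M a m)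
    (hMsum : ∃ C : ℝ≥0∞, C < ⊤ ∧ ∀ a : I, ∑' m : ℕ, ENNReal.ofReal (M a m) ≤ C)
    (hMtail : ∀ ε > (0 : ℝ), ∃ ℓ : ℕ, ∀ a : I,
      ∑' m : ℕ, ENNReal.ofReal (M a (m + ℓ)) ≤ ENNReal.ofReal ε)
    (p : I → ℕ → ℝ) (hp0 : ∀ a m, 0 ≤ p a m) (hp1 : ∀ a m, p a m ≤ 1)
    (hpM : ∀ a : I, ∀ m : ℕ, 1 ≤ m →
      p a m ≤ (2 : ℝ) ^ (-(2 : ℝ) * ((m : ℝ) - 1)) * M a m) :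
    ∀ ε > (0 : ℝ), ∃ N₀ : ℕ, ∀ N ≥ N₀, ∀ a : I,
      ∑' m : ℕ, ∑' l : ℕ,
        ENNReal.ofReal ((2 : ℝ) ^ (2 * m) * (2 : ℝ) ^ (-(2 : ℝ) * (l : ℝ)) *
          min (2 * p a m)
            ((2 : ℝ) ^ (((d : ℝ) * (l : ℝ)) / 2) * Real.sqrt (p a m / (N : ℝ))))
        ≤ ENNReal.ofReal ε := by
  intro ε hε
  obtain ⟨k, hk⟩ := hMtail (ε / 32) (by positivity)
  set K : ℝ := ∑ m ∈ Finset.range (k + 1), (2 : ℝ) ^ (2 * m) with hK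
  have hK0 : 0 < K := by
    apply Finset.sum_pos
    · intro i _; positivity
    · simp
  have hS := (fg_inner_tendsto d).eventually_le_const
    (show (0 : ℝ) < ε / (2 * K) by positivity)
  obtain ⟨N₀, hN₀⟩ := Filter.eventually_atTop.1 hS
  refine ⟨N₀, fun N hN a => ?_⟩
  have hSN := hN₀ N hN
  simp only [fg_pow_aux]
  rw [← Summable.sum_add_tsum_nat_add' (k := k + 1) ENNReal.summable]
  have hsum : Summable fun l : ℕ => (1 / 4 : ℝ) ^ l *
      min 2 ((2 : ℝ) ^ (((d : ℝ) * (l : ℝ)) / 2) * Real.sqrt (1 / (N : ℝ))) := by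
    refine Summable.of_nonneg_of_le (fun l => by positivity) (fun l => ?_)
      ((summable_geometric_of_lt_one (r := (1 / 4 : ℝ)) (by norm_num) (by norm_num)).mul_right 2)
    gcongr
    exact min_le_left _ _
  have hhead : ∀ m : ℕ, ∑' l : ℕ, ENNReal.ofReal ((2 : ℝ) ^ (2 * m) * (1 / 4 : ℝ) ^ l *
      min (2 * p a m)
        ((2 : ℝ) ^ (((d : ℝ) * (l : ℝ)) / 2) * Real.sqrt (p a m / (N : ℝ))))
      ≤ ENNReal.ofReal ((2 : ℝ) ^ (2 * m) * (ε / (2 * K))) := by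
    intro m
    calc _ ≤ ∑' l : ℕ, ENNReal.ofReal ((2 : ℝ) ^ (2 * m) * ((1 / 4 : ℝ) ^ l *
      min 2 ((2 : ℝ) ^ (((d : ℝ) * (l : ℝ)) / 2) * Real.sqrt (1 / (N : ℝ))))) := by
          refine ENNReal.tsum_le_tsum fun l => ENNReal.ofReal_le_ofReal ?_
          rw [mul_assoc]
          have h1 := hp1 a m
          gcongr
          linarith
      _ = ENNReal.ofReal (∑' l : ℕ, (2 : ℝ) ^ (2 * m) * ((1 / 4 : ℝ) ^ l *
      min 2 ((2 : ℝ) ^ (((d : ℝ) * (l : ℝ)) / 2) * Real.sqrt (1 / (N : ℝ))))) := by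
          rw [ENNReal.ofReal_tsum_of_nonneg (fun l => by positivity) (hsum.mul_left _)]
      _ ≤ _ := by
          rw [tsum_mul_left]
          apply ENNReal.ofReal_le_ofReal
          gcongr
  have htail : ∀ m : ℕ, ∑' l : ℕ, ENNReal.ofReal ((2 : ℝ) ^ (2 * (m + (k + 1))) *
      (1 / 4 : ℝ) ^ l * min (2 * p a (m + (k + 1)))
        ((2 : ℝ) ^ (((d : ℝ) * (l : ℝ)) / 2) * Real.sqrt (p a (m + (k + 1)) / (N : ℝ))))
      ≤ ENNReal.ofReal 16 * ENNReal.ofReal (M a (m + 1 + k)) := by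
    intro m
    have e : m + 1 + k = m + (k + 1) := by ring
    rw [e]
    set n := m + (k + 1) with hn
    have hn1 : 1 ≤ n := by omega
    have hb : (2 : ℝ) ^ (2 * n) * p a n ≤ 4 * M a n := by
      have h := hpM a n hn1
      have e1 : ((n : ℝ) - 1) = ((n - 1 : ℕ) : ℝ) := by push_cast [hn1]; ring
      rw [e1, fg_pow_aux] at h
      obtain ⟨r, hr⟩ : ∃ r, n = r + 1 := ⟨n - 1, by omega⟩
      rw [hr] at h ⊢
      simp only [Nat.add_sub_cancel] at h
      have e2 : (2 : ℝ) ^ (2 * (r + 1)) = 4 * 4 ^ r := by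
        rw [pow_mul, pow_succ]; norm_num; ring
      have e3 : (4 : ℝ) ^ r * (1 / 4) ^ r = 1 := by
        rw [← mul_pow]; norm_num
      calc _ ≤ (2 : ℝ) ^ (2 * (r + 1)) * ((1 / 4) ^ r * M a (r + 1)) := by gcongr
        _ = 4 * ((4 : ℝ) ^ r * (1 / 4) ^ r) * M a (r + 1) := by rw [e2]; ring
        _ = _ := by rw [e3]; ring
    calc _ ≤ ∑' l : ℕ, ENNReal.ofReal (8 * M a n) * ENNReal.ofReal ((1 / 4 : ℝ) ^ l) := by
          refine ENNReal.tsum_le_tsum fun l => ?_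
          rw [← ENNReal.ofReal_mul (by have := hM0 a n; positivity)]
          apply ENNReal.ofReal_le_ofReal
          calc _ ≤ (2 : ℝ) ^ (2 * n) * (1 / 4 : ℝ) ^ l * (2 * p a n) := by
                gcongr
                exact min_le_left _ _
            _ = 2 * ((2 : ℝ) ^ (2 * n) * p a n) * (1 / 4 : ℝ) ^ l := by ring
            _ ≤ 2 * (4 * M a n) * (1 / 4 : ℝ) ^ l := by gcongr
            _ = _ := by ring
      _ ≤ ENNReal.ofReal (8 * M a n) * ENNReal.ofReal 2 := by
          rw [ENNReal.tsum_mul_left]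
          gcongr
          exact fg_geom_aux
      _ = _ := by
          rw [← ENNReal.ofReal_mul (by have := hM0 a n; positivity),
            ← ENNReal.ofReal_mul (by norm_num)]
          congr 1; ring
  have hT : ∑' m : ℕ, ENNReal.ofReal (M a (m + 1 + k)) ≤ ENNReal.ofReal (ε / 32) :=
    (ENNReal.tsum_comp_le_tsum_of_injective (f := fun m : ℕ => m + 1)
      (add_left_injective 1) (fun m => ENNReal.ofReal (M a (m + k)))).trans (hk a)
  calc _ ≤ ∑ m ∈ Finset.range (k + 1), ENNReal.ofReal ((2 : ℝ) ^ (2 * m) * (ε / (2 * K))) +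
        ∑' m : ℕ, ENNReal.ofReal 16 * ENNReal.ofReal (M a (m + 1 + k)) :=
        add_le_add (Finset.sum_le_sum fun m _ => hhead m) (ENNReal.tsum_le_tsum htail)
    _ ≤ ENNReal.ofReal (ε / 2) + ENNReal.ofReal 16 * ENNReal.ofReal (ε / 32) := by
        rw [ENNReal.tsum_mul_left, ← ENNReal.ofReal_sum_of_nonneg (fun m _ => by positivity),
          ← Finset.sum_mul, ← hK]
        have e : K * (ε / (2 * K)) = ε / 2 := by field_simp
        rw [e]
        gcongr
    _ = ENNReal.ofReal ε := by
        rw [← ENNReal.ofReal_mul (by norm_num), ← ENNReal.ofReal_add (by positivity)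
          (by positivity)]
        congr 1; ring
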